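/- Let Wdist(F) = inf_{R ∈ SO(2)} ‖F − R‖² and define W̃ : ℝ^{2×2} → ℝ by W̃(F) = 1 − 2·det F if ‖F‖² + 2·det F < 1, and W̃(F) = (√(‖F‖² + 2·det F) − 1)² + 1 − 2·det F otherwise. Then every rank-one convex function w : ℝ^{2×2} → ℝ with w ≤ Wdist satisfies w ≤ W̃; consequently, for every F ∈ ℝ^{2×2}, sup{w(F) : w rank-one convex, w ≤ Wdist} = W̃(F), i.e. W̃ is the rank-one convex envelope of Wdist on ℝ^{2×2}. -/

import Mathlib

/-!
Identify twice the conformal part of `F = !![a, b; c, d]` with the complex number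
`z F = (a + d) + (c - b) i`. Then `‖F‖² + 2 det F = |z F|²` and
`W̃ F = (max |z F| 1 - 1)² + 1 - 2 det F`.

The first summand is a convex function of `F`, and `det` is affine along rank-one segments, so `W̃`
is rank-one convex (`rankOneConvex_Wtilde`). A rotation `R` is a point `r` of the unit circle, and
`‖F - R‖² = |z F - r|² + 1 - 2 det F`; hence `W̃ ≤ Wdist` (`Wtilde_le_Wdist`), with equality when
`|z F| ≥ 1` (`Wdist_le_Wtilde`), the optimal `r` being `z F / |z F|`. So `W̃` is a competitor.

For maximality, only `|z F| < 1` is in question. Varying the top left entry of `F` is a rank-one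
line that moves `z F` horizontally, so it leaves the unit disc on both sides of `F`. At the two
exit points `Wdist = W̃ = 1 - 2 det`, and `1 - 2 det` is affine on the line, so rank-one convexity
of `w` gives `w F ≤ 1 - 2 det F = W̃ F`.
-/

open Matrix

/-- Squared Frobenius norm of a real matrix. -/
noncomputable def frobSq {n : ℕ} (A : Matrix (Fin n) (Fin n) ℝ) : ℝ :=
  ∑ i, ∑ j, (A i j) ^ 2

/-- The special orthogonal group SO(2) as a set of real 2×2 matrices. -/
def SO2 : Set (Matrix (Fin 2) (Fin 2) ℝ) :=
  {Q | Qᵀ * Q = 1 ∧ Q.det = 1}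

/-- Rank-one convexity for functions on real 2×2 matrices. -/
def RankOneConvex (w : Matrix (Fin 2) (Fin 2) ℝ → ℝ) : Prop :=
  ∀ A B : Matrix (Fin 2) (Fin 2) ℝ, (B - A).rank = 1 →
    ∀ t ∈ Set.Icc (0 : ℝ) 1,
      w (t • A + (1 - t) • B) ≤ t * w A + (1 - t) * w B

/-- Squared Euclidean (Frobenius) distance to SO(2). -/
noncomputable def Wdist (F : Matrix (Fin 2) (Fin 2) ℝ) : ℝ :=
  sInf {x : ℝ | ∃ R ∈ SO2, x = frobSq (F - R)}

/-- The candidate relaxed energy. -/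
noncomputable def Wtilde (F : Matrix (Fin 2) (Fin 2) ℝ) : ℝ :=
  if frobSq F + 2 * F.det < 1 then 1 - 2 * F.det
  else (Real.sqrt (frobSq F + 2 * F.det) - 1) ^ 2 + 1 - 2 * F.det

/-- Twice the conformal part of a real `2 × 2` matrix, as a complex number. -/
noncomputable def confPart (F : Matrix (Fin 2) (Fin 2) ℝ) : ℂ :=
  ⟨F 0 0 + F 1 1, F 1 0 - F 0 1⟩

lemma frobSq_two (F : Matrix (Fin 2) (Fin 2) ℝ) :
    frobSq F = F 0 0 ^ 2 + F 0 1 ^ 2 + F 1 0 ^ 2 + F 1 1 ^ 2 := by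
  simp [frobSq, Fin.sum_univ_two]; ring

lemma confPart_sq (F : Matrix (Fin 2) (Fin 2) ℝ) :
    ‖confPart F‖ ^ 2 = (F 0 0 + F 1 1) ^ 2 + (F 1 0 - F 0 1) ^ 2 := by
  rw [← Complex.normSq_eq_norm_sq, Complex.normSq_apply]
  simp only [confPart]; ring

lemma frobSq_add_det (F : Matrix (Fin 2) (Fin 2) ℝ) :
    frobSq F + 2 * F.det = ‖confPart F‖ ^ 2 := by
  rw [confPart_sq, frobSq_two, Matrix.det_fin_two]; ring

lemma Wtilde_eq (F : Matrix (Fin 2) (Fin 2) ℝ) :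
    Wtilde F = (max ‖confPart F‖ 1 - 1) ^ 2 + 1 - 2 * F.det := by
  have h0 := norm_nonneg (confPart F)
  unfold Wtilde
  rw [frobSq_add_det, Real.sqrt_sq h0]
  split_ifs with h
  · rw [max_eq_right (by nlinarith)]; ring
  · rw [max_eq_left (by nlinarith)]

lemma rankOneConvex_Wtilde : RankOneConvex Wtilde := by
  intro A B hr t ht
  obtain ⟨h0, h1⟩ := ht
  have hd : (B - A).det = 0 := by
    by_contra h
    have := Matrix.rank_of_isUnit (B - A) ((Matrix.isUnit_iff_isUnit_det _).2 (isUnit_iff_ne_zero.2 h))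
    rw [hr] at this
    simp at this
  have hdet : (t • A + (1 - t) • B).det = t * A.det + (1 - t) * B.det := by
    rw [Matrix.det_fin_two] at hd ⊢
    simp only [Matrix.det_fin_two, Matrix.add_apply, Matrix.sub_apply, Matrix.smul_apply,
      smul_eq_mul] at hd ⊢
    linear_combination (-t * (1 - t)) * hd
  have hc : confPart (t • A + (1 - t) • B) = t • confPart A + (1 - t) • confPart B := by
    apply Complex.ext <;> simp [confPart] <;> ring
  have hn : ‖confPart (t • A + (1 - t) • B)‖ ≤ t * ‖confPart A‖ + (1 - t) * ‖confPart B‖ := by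
    rw [hc]
    refine (norm_add_le _ _).trans ?_
    rw [norm_smul, norm_smul, Real.norm_of_nonneg h0, Real.norm_of_nonneg (sub_nonneg.2 h1)]
  rw [Wtilde_eq, Wtilde_eq, Wtilde_eq, hdet]
  have h1' := sub_nonneg.2 h1
  have hA := le_max_left ‖confPart A‖ 1
  have hA' := le_max_right ‖confPart A‖ 1
  have hB := le_max_left ‖confPart B‖ 1
  have hB' := le_max_right ‖confPart B‖ 1
  set u := max ‖confPart A‖ 1
  set v := max ‖confPart B‖ 1
  have hm : max ‖confPart (t • A + (1 - t) • B)‖ 1 ≤ t * u + (1 - t) * v := by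
    apply max_le
    · have := mul_le_mul_of_nonneg_left hA h0
      have := mul_le_mul_of_nonneg_left hB h1'
      linarith
    · nlinarith
  have hm' := le_max_right ‖confPart (t • A + (1 - t) • B)‖ 1
  set m := max ‖confPart (t • A + (1 - t) • B)‖ 1
  have hsq : (m - 1) ^ 2 ≤ (t * u + (1 - t) * v - 1) ^ 2 :=
    pow_le_pow_left₀ (by linarith) (by linarith) 2
  nlinarith [mul_nonneg (mul_nonneg h0 h1') (sq_nonneg (u - v))]

lemma SO2_entries {R : Matrix (Fin 2) (Fin 2) ℝ} (hR : R ∈ SO2) :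
    R 1 1 = R 0 0 ∧ R 0 1 = - R 1 0 ∧ R 0 0 ^ 2 + R 1 0 ^ 2 = 1 := by
  obtain ⟨h, hd⟩ := hR
  have h00 := congrFun (congrFun h 0) 0
  have h11 := congrFun (congrFun h 1) 1
  simp [Matrix.mul_apply, Fin.sum_univ_two] at h00 h11
  rw [Matrix.det_fin_two] at hd
  -- `(R₁₁ - R₀₀)² + (R₀₁ + R₁₀)² = ‖R‖² - 2 det R = 0`
  have key : (R 1 1 - R 0 0) ^ 2 + (R 0 1 + R 1 0) ^ 2 = 0 := by nlinarith
  have e1 : R 1 1 - R 0 0 = 0 := by nlinarith [sq_nonneg (R 1 1 - R 0 0), sq_nonneg (R 0 1 + R 1 0)]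
  have e2 : R 0 1 + R 1 0 = 0 := by nlinarith [sq_nonneg (R 1 1 - R 0 0), sq_nonneg (R 0 1 + R 1 0)]
  exact ⟨by linarith, by linarith, by nlinarith⟩

lemma Wtilde_le_frobSq_sub (F : Matrix (Fin 2) (Fin 2) ℝ) {R : Matrix (Fin 2) (Fin 2) ℝ}
    (hR : R ∈ SO2) : Wtilde F ≤ frobSq (F - R) := by
  obtain ⟨e1, e2, e3⟩ := SO2_entries hR
  have hz := confPart_sq F
  have h0 := norm_nonneg (confPart F)
  rw [Wtilde_eq, frobSq_two, Matrix.det_fin_two]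
  simp only [Matrix.sub_apply, e1, e2]
  set p := R 0 0
  set q := R 1 0
  set s := ‖confPart F‖
  set x := F 0 0 + F 1 1 with hx
  set y := F 1 0 - F 0 1 with hy
  have hid : (F 0 0 - p) ^ 2 + (F 0 1 - -q) ^ 2 + (F 1 0 - q) ^ 2 + (F 1 1 - p) ^ 2
      = (x - p) ^ 2 + (y - q) ^ 2 + 1 - 2 * (F 0 0 * F 1 1 - F 0 1 * F 1 0) := by
    rw [hx, hy]; linear_combination e3
  rw [hid]
  rcases le_total s 1 with h | h
  · rw [max_eq_right h]
    nlinarith [sq_nonneg (x - p), sq_nonneg (y - q)]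
  · rw [max_eq_left h]
    have hcs : x * p + y * q ≤ s := by
      apply le_of_sq_le_sq _ h0
      nlinarith [sq_nonneg (x * q - y * p)]
    nlinarith

lemma Wtilde_le_Wdist (F : Matrix (Fin 2) (Fin 2) ℝ) : Wtilde F ≤ Wdist F := by
  apply le_csInf
  · exact ⟨_, 1, by simp [SO2], rfl⟩
  · rintro _ ⟨R, hR, rfl⟩
    exact Wtilde_le_frobSq_sub F hR

/-- Outside the open unit disc the optimal rotation is the normalised conformal part. -/
lemma Wdist_le_Wtilde (F : Matrix (Fin 2) (Fin 2) ℝ) (h : 1 ≤ ‖confPart F‖) :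
    Wdist F ≤ Wtilde F := by
  have hz := confPart_sq F
  have hs : ‖confPart F‖ ≠ 0 := by positivity
  rw [Wtilde_eq, max_eq_left h]
  set s := ‖confPart F‖
  set x := F 0 0 + F 1 1 with hx
  set y := F 1 0 - F 0 1 with hy
  have hpq : (x / s) * (x / s) + (y / s) * (y / s) = 1 := by
    field_simp; linarith
  have hR : !![x / s, -(y / s); y / s, x / s] ∈ SO2 := by
    constructor
    · ext i j
      fin_cases i <;> fin_cases j <;>
        simp [Matrix.mul_apply, Fin.sum_univ_two] <;> linarith
    · rw [Matrix.det_fin_two_of]; linarith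
  have hinf : Wdist F ≤ frobSq (F - !![x / s, -(y / s); y / s, x / s]) := by
    refine csInf_le ⟨Wtilde F, ?_⟩ ⟨_, hR, rfl⟩
    rintro _ ⟨R, hR, rfl⟩
    exact Wtilde_le_frobSq_sub F hR
  refine hinf.trans (le_of_eq ?_)
  have hp : x * (x / s) + y * (y / s) = s := by
    field_simp; linarith
  rw [frobSq_two, Matrix.det_fin_two]
  simp only [Matrix.sub_apply, Matrix.of_apply, Matrix.cons_val', Matrix.cons_val_zero,
    Matrix.cons_val_one, Matrix.cons_val_fin_one]
  generalize x / s = p at *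
  generalize y / s = q at *
  rw [hx, hy] at hp hz
  linear_combination 2 * hpq - 2 * hp - hz

lemma rank_single {k : ℝ} (hk : k ≠ 0) : (!![k, 0; 0, 0] : Matrix (Fin 2) (Fin 2) ℝ).rank = 1 := by
  have e : (!![k, 0; 0, 0] : Matrix (Fin 2) (Fin 2) ℝ) = Matrix.vecMulVec ![k, 0] ![1, 0] := by
    ext i j; fin_cases i <;> fin_cases j <;> simp [Matrix.vecMulVec]
  apply le_antisymm
  · rw [e]; exact Matrix.rank_vecMulVec_le _ _
  · rw [Nat.one_le_iff_ne_zero, Ne, Matrix.rank, Submodule.finrank_eq_zero, LinearMap.range_eq_bot]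
    intro h
    exact hk (by simpa using congrFun (LinearMap.congr_fun h ![1, 0]) 0)

lemma le_Wtilde_of_rankOneConvex {w : Matrix (Fin 2) (Fin 2) ℝ → ℝ} (hw : RankOneConvex w)
    (hle : ∀ G, w G ≤ Wdist G) (F : Matrix (Fin 2) (Fin 2) ℝ) : w F ≤ Wtilde F := by
  rcases le_or_gt 1 ‖confPart F‖ with h | h
  · exact (hle F).trans (Wdist_le_Wtilde F h)
  have hz := confPart_sq F
  have hlt : (F 0 0 + F 1 1) ^ 2 + (F 1 0 - F 0 1) ^ 2 < 1 := by
    rw [← hz]; nlinarith [norm_nonneg (confPart F)]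
  rw [Wtilde_eq, max_eq_right h.le]
  -- the horizontal line through `confPart F` meets the unit circle at real parts `± k`
  obtain ⟨k, hk, hk2⟩ : ∃ k : ℝ, 0 < k ∧ k ^ 2 = 1 - (F 1 0 - F 0 1) ^ 2 :=
    ⟨√(1 - (F 1 0 - F 0 1) ^ 2), Real.sqrt_pos.2 (by nlinarith [sq_nonneg (F 0 0 + F 1 1)]),
      Real.sq_sqrt (by nlinarith [sq_nonneg (F 0 0 + F 1 1)])⟩
  have hx : |F 0 0 + F 1 1| < k := abs_lt_of_sq_lt_sq (by linarith) hk.le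
  obtain ⟨hx1, hx2⟩ := abs_lt.1 hx
  have bound : ∀ e : ℝ, e ^ 2 = k ^ 2 →
      w !![e - F 1 1, F 0 1; F 1 0, F 1 1]
        ≤ 1 - 2 * ((e - F 1 1) * F 1 1 - F 0 1 * F 1 0) := by
    intro e he
    have hn : ‖confPart !![e - F 1 1, F 0 1; F 1 0, F 1 1]‖ = 1 := by
      have := confPart_sq !![e - F 1 1, F 0 1; F 1 0, F 1 1]
      simp at this
      rw [he, hk2] at this
      exact (pow_eq_one_iff_of_nonneg (norm_nonneg _) two_ne_zero).1 (by linarith)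
    have := (hle _).trans (Wdist_le_Wtilde _ hn.ge)
    rw [Wtilde_eq, hn, Matrix.det_fin_two_of] at this
    simpa using this
  have b1 := bound k rfl
  have b2 := bound (-k) (by ring)
  set t := (F 0 0 + F 1 1 + k) / (2 * k) with ht
  have htk : t * (2 * k) = F 0 0 + F 1 1 + k := by rw [ht]; field_simp
  have ht0 : 0 ≤ t := div_nonneg (by linarith) (by linarith)
  have ht1 : t ≤ 1 := (div_le_one (by linarith)).2 (by linarith)
  have hr := hw !![k - F 1 1, F 0 1; F 1 0, F 1 1] !![-k - F 1 1, F 0 1; F 1 0, F 1 1]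
    (by
      refine (congrArg Matrix.rank ?_).trans (rank_single (k := -(2 * k)) (by linarith))
      ext i j; fin_cases i <;> fin_cases j <;> simp
      ring) t ⟨ht0, ht1⟩
  have hF : t • !![k - F 1 1, F 0 1; F 1 0, F 1 1]
      + (1 - t) • !![-k - F 1 1, F 0 1; F 1 0, F 1 1] = F := by
    ext i j; fin_cases i <;> fin_cases j <;> simp
    · linear_combination htk
    all_goals ring
  rw [hF] at hr
  have c1 := mul_le_mul_of_nonneg_left b1 ht0
  have c2 := mul_le_mul_of_nonneg_left b2 (sub_nonneg.2 ht1)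
  rw [Matrix.det_fin_two]
  refine (hr.trans (add_le_add c1 c2)).trans (le_of_eq ?_)
  linear_combination (-2 * F 1 1) * htk

theorem rank_one_convex_envelope_of_Wdist :
    (∀ w : Matrix (Fin 2) (Fin 2) ℝ → ℝ,
        RankOneConvex w → (∀ G, w G ≤ Wdist G) → ∀ G, w G ≤ Wtilde G) ∧
    ∀ F : Matrix (Fin 2) (Fin 2) ℝ,
      sSup {y : ℝ | ∃ w : Matrix (Fin 2) (Fin 2) ℝ → ℝ,
        RankOneConvex w ∧ (∀ G, w G ≤ Wdist G) ∧ y = w F} = Wtilde F := by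
  refine ⟨fun w hw hle G => le_Wtilde_of_rankOneConvex hw hle G, fun F => ?_⟩
  apply IsGreatest.csSup_eq
  refine ⟨⟨Wtilde, rankOneConvex_Wtilde, Wtilde_le_Wdist, rfl⟩, ?_⟩
  rintro _ ⟨w, hw, hle, rfl⟩
  exact le_Wtilde_of_rankOneConvex hw hle F
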